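/- For every k > 0 and every ψ ≥ 0, ∫_k^ψ (ln μ − ln k)⁺ dμ ≥ 2 [(√ψ − √k)⁺]², where a⁺ = max(a,0); explicitly, for ψ ≥ k one has ∫_k^ψ ln(μ/k) dμ ≥ 2(√ψ − √k)², while for ψ < k both sides equal 0. -/

import Mathlib

open MeasureTheory

/-!
For `μ ≥ k` the inequality `log x ≥ 1 - 1 / x` at `x = √μ / √k` gives
`log (μ / k) ≥ 2 (√μ - √k) / √μ`, and the right-hand side is exactly the derivative of
`μ ↦ 2 (√μ - √k) ^ 2`, which vanishes at `k`. Integrating from `k` to `ψ` gives the bound.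
For `ψ < k` the integrand vanishes on `(ψ, k]`.
-/

/-- The pointwise bound on the integrand. -/
lemma two_mul_sub_div_sqrt_le_log {k x : ℝ} (hk : 0 < k) (hx : 0 < x) :
    2 * (Real.sqrt x - Real.sqrt k) / Real.sqrt x ≤ Real.log (x / k) := by
  have hsk := Real.sqrt_pos.2 hk
  have hsx := Real.sqrt_pos.2 hx
  have h := Real.one_sub_inv_le_log_of_pos (div_pos hsx hsk)
  have hlog : Real.log (x / k) = 2 * Real.log (Real.sqrt x / Real.sqrt k) := by
    rw [Real.log_div hx.ne' hk.ne', Real.log_div hsx.ne' hsk.ne', Real.log_sqrt hx.le,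
      Real.log_sqrt hk.le]
    ring
  have hrw : 2 * (Real.sqrt x - Real.sqrt k) / Real.sqrt x
      = 2 * (1 - (Real.sqrt x / Real.sqrt k)⁻¹) := by
    field_simp
  rw [hlog, hrw]
  linarith

lemma two_mul_sq_le_integral_log {k ψ : ℝ} (hk : 0 < k) (h : k ≤ ψ) :
    2 * (Real.sqrt ψ - Real.sqrt k) ^ 2 ≤ ∫ μ in k..ψ, Real.log (μ / k) := by
  have hpos : ∀ x ∈ Set.uIcc k ψ, 0 < x := fun x hx => by
    rw [Set.uIcc_of_le h] at hx
    exact hk.trans_le hx.1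
  have hint : IntervalIntegrable
      (fun x => 2 * (Real.sqrt x - Real.sqrt k) / Real.sqrt x) volume k ψ := by
    apply ContinuousOn.intervalIntegrable
    apply ContinuousOn.div (by fun_prop) (by fun_prop)
    exact fun x hx => (Real.sqrt_pos.2 (hpos x hx)).ne'
  have hlog : IntervalIntegrable (fun x => Real.log (x / k)) volume k ψ := by
    apply ContinuousOn.intervalIntegrable
    apply ContinuousOn.log (by fun_prop)
    exact fun x hx => (div_pos (hpos x hx) hk).ne'
  have hFTC : ∫ x in k..ψ, 2 * (Real.sqrt x - Real.sqrt k) / Real.sqrt x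
      = 2 * (Real.sqrt ψ - Real.sqrt k) ^ 2 - 2 * (Real.sqrt k - Real.sqrt k) ^ 2 := by
    refine intervalIntegral.integral_eq_sub_of_hasDerivAt
      (f := fun x => 2 * (Real.sqrt x - Real.sqrt k) ^ 2) (fun x hx => ?_) hint
    have hx0 := hpos x hx
    have hsx := Real.sqrt_pos.2 hx0
    refine ((((Real.hasDerivAt_sqrt hx0.ne').sub_const (Real.sqrt k)).fun_pow 2).const_mul
      2).congr_deriv ?_
    field_simp
    simp
  have hle := intervalIntegral.integral_mono_on h hint hlog
    (fun x hx => two_mul_sub_div_sqrt_le_log hk (hk.trans_le hx.1))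
  rw [hFTC] at hle
  simpa using hle

/-- For every `k > 0` and `ψ ≥ 0`,
`∫_k^ψ (ln μ − ln k)⁺ dμ ≥ 2 [(√ψ − √k)⁺]²`; explicitly, for `ψ ≥ k` one has
`∫_k^ψ ln(μ/k) dμ ≥ 2(√ψ − √k)²`, while for `ψ < k` both sides vanish. -/
theorem log_truncation_lower_bound (k ψ : ℝ) (hk : 0 < k) (hψ : 0 ≤ ψ) :
    (2 * (max (Real.sqrt ψ - Real.sqrt k) 0) ^ 2
        ≤ ∫ μ in k..ψ, max (Real.log μ - Real.log k) 0) ∧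
      (k ≤ ψ →
        2 * (Real.sqrt ψ - Real.sqrt k) ^ 2 ≤ ∫ μ in k..ψ, Real.log (μ / k)) ∧
      (ψ < k →
        (∫ μ in k..ψ, max (Real.log μ - Real.log k) 0) = 0 ∧
          max (Real.sqrt ψ - Real.sqrt k) 0 = 0) := by
  have hlt : ψ < k → (∫ μ in k..ψ, max (Real.log μ - Real.log k) 0) = 0 ∧
      max (Real.sqrt ψ - Real.sqrt k) 0 = 0 := by
    intro h
    refine ⟨?_, max_eq_right (sub_nonpos.2 (Real.sqrt_le_sqrt h.le))⟩
    apply intervalIntegral.integral_zero_ae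
    refine Filter.Eventually.of_forall fun x hx => ?_
    -- The interval is open at `ψ`, so `x > 0` even when `ψ = 0`, where `Real.log` is junk.
    rw [Set.uIoc_of_ge h.le] at hx
    exact max_eq_right (sub_nonpos.2 (Real.log_le_log (hψ.trans_lt hx.1) hx.2))
  refine ⟨?_, two_mul_sq_le_integral_log hk, hlt⟩
  rcases le_or_gt k ψ with h | h
  · have hcongr : (∫ μ in k..ψ, max (Real.log μ - Real.log k) 0)
        = ∫ μ in k..ψ, Real.log (μ / k) := by
      refine intervalIntegral.integral_congr fun x hx => ?_
      rw [Set.uIcc_of_le h] at hx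
      have hx0 := hk.trans_le hx.1
      simp only [Real.log_div hx0.ne' hk.ne']
      exact max_eq_left (sub_nonneg.2 (Real.log_le_log hk hx.1))
    rw [hcongr, max_eq_left (sub_nonneg.2 (Real.sqrt_le_sqrt h))]
    exact two_mul_sq_le_integral_log hk h
  · obtain ⟨h1, h2⟩ := hlt h
    simp [h1, h2]
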